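/- For every integer d ≥ 3, the coefficients of Theorem 1 satisfy the test-curve relation coming from intersecting TR_d with a pencil of irreducible nodal curves: (4d−8)·B₀(d) − B₁(d) = (d−1)·N(d) + 3·N₂(d) + 3·(d−2)·e(d, 2d−4) + 128·binom(2d−4, d) + 2·binom(2d−4, d−1). -/

import Mathlib

/-- The factorial of an integer `n`, interpreted as `0! = 1` extended by `n! = (n.toNat)!`
(only ever applied to nonnegative integers). -/
noncomputable def zfact (n : ℤ) : ℚ := (Nat.factorial n.toNat : ℚ)

/-- `1/n!` for an integer `n`, with the convention `1/n! = 0` whenever `n < 0`. -/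
noncomputable def invfact (n : ℤ) : ℚ :=
  if 0 ≤ n then (Nat.factorial n.toNat : ℚ)⁻¹ else 0

/-- The binomial coefficient `binom(n, k)` for integers, equal to `0` when `k > n` or `k < 0`. -/
noncomputable def zbinom (n k : ℤ) : ℚ :=
  if 0 ≤ k ∧ k ≤ n then (Nat.choose n.toNat k.toNat : ℚ) else 0

/-- `a(d, g) = (2d−g−1)·g!/(d!·(g−d+1)!)` from Proposition 2.1. -/
noncomputable def aCount (d g : ℤ) : ℚ :=
  ((2 * d - g - 1 : ℤ) : ℚ) * zfact g * invfact d * invfact (g - d + 1)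

/-- `b(d, g) = (2d−g−1)·(2d−g)·(2d−g+1)·g!/(d!·(g−d)!)` from Proposition 2.1. -/
noncomputable def bCount (d g : ℤ) : ℚ :=
  ((2 * d - g - 1 : ℤ) : ℚ) * ((2 * d - g : ℤ) : ℚ) * ((2 * d - g + 1 : ℤ) : ℚ) *
    zfact g * invfact d * invfact (g - d)

/-- `c(d, g, γ) = (γ²·(2d−g) − γ)·binom(g, d)` from Proposition 2.1. -/
noncomputable def cCount (d g γ : ℤ) : ℚ :=
  (((γ : ℚ) ^ 2 * ((2 * d - g : ℤ) : ℚ) - (γ : ℚ))) * zbinom g d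

/-- `e(d, g) = 8·g!/((d−3)!·(g−d+2)!) − 8·g!/(d!·(g−d−1)!)` from Proposition 2.1. -/
noncomputable def eCount (d g : ℤ) : ℚ :=
  8 * zfact g * invfact (d - 3) * invfact (g - d + 2) -
    8 * zfact g * invfact d * invfact (g - d - 1)

/-- `N(d)`, the number of pencils of degree `d` with two unspecified triple ramification
points on a general curve of genus `2d−4` (Proposition 2.2 (2)). -/
noncomputable def Ncount (d : ℤ) : ℚ :=
  48 * (6 * (d : ℚ) ^ 2 - 28 * (d : ℚ) + 35) * zfact (2 * d - 4) * invfact d * invfact (d - 3)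

/-- `N₁(d)` from Proposition 2.2 (3). -/
noncomputable def N1count (d : ℤ) : ℚ :=
  24 * (12 * (d : ℚ) ^ 3 - 92 * (d : ℚ) ^ 2 + 240 * (d : ℚ) - 215) *
    zfact (2 * d - 4) * invfact d * invfact (d - 2)

/-- `N₂(d)` from Theorem 5.4. -/
noncomputable def N2count (d : ℤ) : ℚ :=
  6 * (40 * (d : ℚ) ^ 2 - 179 * (d : ℚ) + 212) * zfact (2 * d - 4) * invfact d * invfact (d - 3)

/-- `N₃(d)` from Theorem 5.6. -/
noncomputable def N3count (d : ℤ) : ℚ :=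
  84 * ((d : ℚ) - 3) * (2 * (d : ℚ) ^ 2 - 10 * (d : ℚ) + 13) *
    zfact (2 * d - 4) * invfact d * invfact (d - 2)

/-- The overall constant `K(d) = 2·(2d−6)!/(d!·(d−3)!)` of Theorem 1. -/
noncomputable def Kconst (d : ℤ) : ℚ := 2 * zfact (2 * d - 6) * invfact d * invfact (d - 3)

/-- The `λ`-coefficient `A(d) = K(d)·24·(36d⁴−36d³−640d²+1885d−1475)` of Theorem 1. -/
noncomputable def Acoeff (d : ℤ) : ℚ :=
  Kconst d * (24 * (36 * (d : ℚ) ^ 4 - 36 * (d : ℚ) ^ 3 - 640 * (d : ℚ) ^ 2 +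
    1885 * (d : ℚ) - 1475))

/-- The `δ₀`-coefficient `B₀(d) = K(d)·(144d⁴−528d³−298d²+3049d−2940)` of Theorem 1. -/
noncomputable def B0coeff (d : ℤ) : ℚ :=
  Kconst d * (144 * (d : ℚ) ^ 4 - 528 * (d : ℚ) ^ 3 - 298 * (d : ℚ) ^ 2 +
    3049 * (d : ℚ) - 2940)

/-- The `δᵢ`-coefficient `Bᵢ(d) = K(d)·12·i·(2d−3−i)·(36d³−156d²+180d−5)`, `i ≥ 1`,
of Theorem 1. -/
noncomputable def Bcoeff (d i : ℤ) : ℚ :=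
  Kconst d * (12 * (i : ℚ) * (2 * (d : ℚ) - 3 - (i : ℚ)) *
    (36 * (d : ℚ) ^ 3 - 156 * (d : ℚ) ^ 2 + 180 * (d : ℚ) - 5))

theorem invfact_pred (n m : ℤ) (h : m = n - 1) : invfact m = (n : ℚ) * invfact n := by
  subst h
  unfold invfact
  rcases lt_trichotomy n 0 with h | h | h
  · rw [if_neg (by omega), if_neg (by omega)]; simp
  · subst h; simp
  · obtain ⟨k, rfl⟩ : ∃ k : ℕ, n = (k : ℤ) + 1 := ⟨(n - 1).toNat, by omega⟩
    rw [if_pos (by omega), if_pos (by omega)]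
    have h1 : ((k : ℤ) + 1 - 1).toNat = k := by omega
    have h2 : ((k : ℤ) + 1).toNat = k + 1 := by omega
    rw [h1, h2, Nat.factorial_succ]
    have : (k.factorial : ℚ) ≠ 0 := by exact_mod_cast k.factorial_ne_zero
    have : (k : ℚ) + 1 ≠ 0 := by positivity
    push_cast
    field_simp

theorem zfact_step (n m : ℤ) (h : m = n + 1) (hn : 0 ≤ n) :
    zfact m = (m : ℚ) * zfact n := by
  subst h
  lift n to ℕ using hn
  unfold zfact
  have h2 : ((n : ℤ) + 1).toNat = n + 1 := by omega
  rw [h2, Nat.factorial_succ]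
  simp

theorem zbinom_eq (n k : ℤ) (hk : 0 ≤ k) (hn : 0 ≤ n) :
    zbinom n k = zfact n * invfact k * invfact (n - k) := by
  unfold zbinom zfact invfact
  lift n to ℕ using hn
  lift k to ℕ using hk
  by_cases h : k ≤ n
  · rw [if_pos (by omega), if_pos (by omega), if_pos (by omega)]
    have : ((n : ℤ) - k).toNat = n - k := by omega
    rw [this, Int.toNat_natCast, Int.toNat_natCast, Nat.cast_choose ℚ h]
    field_simp
  · rw [if_neg (by omega), if_neg (by omega : ¬ (0 : ℤ) ≤ (n : ℤ) - k)]; simp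

/-- the test-curve relation from intersecting `TR_d` with a pencil of irreducible
nodal curves (equation (5) in the proof of Theorem 4.2), for every integer `d ≥ 3`:
`(4d−8)·B₀(d) − B₁(d) = (d−1)·N(d) + 3·N₂(d) + 3·(d−2)·e(d, 2d−4) + 128·binom(2d−4, d)
 + 2·binom(2d−4, d−1)`. -/
theorem nodal_test_curve_relation (d : ℤ) (hd : 3 ≤ d) :
    (4 * (d : ℚ) - 8) * B0coeff d - Bcoeff d 1 =
      ((d : ℚ) - 1) * Ncount d + 3 * N2count d + 3 * ((d : ℚ) - 2) * eCount d (2 * d - 4) +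
        128 * zbinom (2 * d - 4) d + 2 * zbinom (2 * d - 4) (d - 1) := by
  have hG : zfact (2 * d - 4) = (2 * (d : ℚ) - 4) * ((2 * (d : ℚ) - 5) * zfact (2 * d - 6)) := by
    rw [zfact_step (2 * d - 5) (2 * d - 4) (by ring) (by omega),
      zfact_step (2 * d - 6) (2 * d - 5) (by ring) (by omega)]
    push_cast
    ring
  have a1 : invfact (d - 1) = (d : ℚ) * invfact d := invfact_pred _ _ (by ring)
  have a2 : invfact (d - 2) = ((d : ℚ) - 1) * invfact (d - 1) := by
    rw [invfact_pred (d - 1) (d - 2) (by ring)]; push_cast; ring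
  have a3 : invfact (d - 3) = ((d : ℚ) - 2) * invfact (d - 2) := by
    rw [invfact_pred (d - 2) (d - 3) (by ring)]; push_cast; ring
  have a4 : invfact (d - 4) = ((d : ℚ) - 3) * invfact (d - 3) := by
    rw [invfact_pred (d - 3) (d - 4) (by ring)]; push_cast; ring
  have a5 : invfact (d - 5) = ((d : ℚ) - 4) * invfact (d - 4) := by
    rw [invfact_pred (d - 4) (d - 5) (by ring)]; push_cast; ring
  rw [zbinom_eq _ _ (by omega) (by omega), zbinom_eq _ _ (by omega) (by omega)]
  unfold B0coeff Bcoeff Ncount N2count eCount Kconst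
  have e1 : 2 * d - 4 - d = d - 4 := by ring
  have e2 : 2 * d - 4 - (d - 1) = d - 3 := by ring
  have e3 : d - 4 + 2 = d - 2 := by ring
  have e4 : d - 4 - 1 = d - 5 := by ring
  rw [e2, e1, e3, e4, hG, a5, a4, a3, a2, a1]
  push_cast
  ring
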